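/- Fix l > 0 and parameters C1 > 0, C2 > 0, m1, m2 ∈ ℝ, and let μ = (μ1, μ2, μ3, μ4) = Φ(C1, C2, m1, m2). Let ψ : {ν ∈ (ℝ>0)⁴ : ν2·ν3·ν4 < ν1³} → ℝ be defined by ψ(ν) = 3l² / log(ν1³/(ν2·ν3·ν4)). Then the squared Euclidean norm of the gradient of ψ at μ equals (C2⁴ · exp(2(m1² + m2²)/C2) / (9 · C1² · l⁴)) · ( 9 + exp(2l(l − 2m2)/C2) + exp(2l(l + √3·m1 + m2)/C2) + exp(2l(l − √3·m1 + m2)/C2) ). -/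

import Mathlib

open Real

/-- The Gaussian field `F(x1,x2) = C1 * exp(-((x1-m1)^2+(x2-m2)^2)/C2)`. -/
noncomputable def gaussF (C1 C2 m1 m2 x1 x2 : ℝ) : ℝ :=
  C1 * Real.exp (-((x1 - m1) ^ 2 + (x2 - m2) ^ 2) / C2)

/-! Give the sensors weights `w` with `∑ wᵢ = 0` and `∑ wᵢ pᵢ = 0`. Then `∑ wᵢ log F(pᵢ)` no longer
depends on the amplitude or on the centre of the Gaussian `F`: it equals `-(∑ wᵢ ‖pᵢ‖²) / C2`. So
`C2` is a constant divided by a weighted sum of logarithms of the measurements, and the gradient of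
such a quotient at `μ` has `i`-th coordinate proportional to `wᵢ / μᵢ`. In the hexagonal cell the
centre is the centroid of its three neighbours, whence the weights `3, -1, -1, -1`. -/

open scoped Topology

section Gradient

theorem hasGradientAt_const_div {E : Type*} [NormedAddCommGroup E] [InnerProductSpace ℝ E]
    [CompleteSpace E] {f : E → ℝ} {f' a : E} (c : ℝ) (hf : HasGradientAt f f' a) (ha : f a ≠ 0) :
    HasGradientAt (fun z => c / f z) (-(c / f a ^ 2) • f') a := by
  rw [hasGradientAt_iff_hasFDerivAt] at hf ⊢
  have hdiv : HasDerivAt (fun t => c / t) (-(c / f a ^ 2)) (f a) := by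
    simpa only [div_eq_mul_inv, mul_neg] using (hasDerivAt_inv ha).const_mul c
  rw [map_smul]
  exact hdiv.comp_hasFDerivAt a hf

variable {ι : Type*} [Fintype ι] {ν : EuclideanSpace ℝ ι}

theorem hasGradientAt_sum_mul_log (w : ι → ℝ) (hν : ∀ i, ν i ≠ 0) :
    HasGradientAt (fun z : EuclideanSpace ℝ ι => ∑ i, w i * log (z i))
      (WithLp.toLp 2 fun i => w i / ν i) ν := by
  have hcoord (i : ι) :
      HasFDerivAt (fun z : EuclideanSpace ℝ ι => z i) (EuclideanSpace.proj (𝕜 := ℝ) i) ν :=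
    (EuclideanSpace.proj (𝕜 := ℝ) i).hasFDerivAt
  have hsum := HasFDerivAt.fun_sum (u := Finset.univ) fun i _ =>
    ((hcoord i).log (hν i)).const_mul (w i)
  rw [hasGradientAt_iff_hasFDerivAt]
  refine hsum.congr_fderiv ?_
  ext v
  simp [PiLp.inner_apply, div_eq_mul_inv, mul_assoc, mul_comm]

theorem sq_norm_gradient_const_div_sum_mul_log (c : ℝ) (w : ι → ℝ) (hν : ∀ i, ν i ≠ 0)
    (hsum : ∑ i, w i * log (ν i) ≠ 0) :
    ‖gradient (fun z : EuclideanSpace ℝ ι => c / ∑ i, w i * log (z i)) ν‖ ^ 2 =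
      (c / (∑ i, w i * log (ν i)) ^ 2) ^ 2 * ∑ i, (w i / ν i) ^ 2 := by
  rw [(hasGradientAt_const_div c (hasGradientAt_sum_mul_log w hν) hsum).gradient, norm_smul,
    mul_pow, EuclideanSpace.real_norm_sq_eq, norm_neg, Real.norm_eq_abs, sq_abs]

end Gradient

section GaussianField

variable {C1 C2 : ℝ} (m1 m2 : ℝ)

theorem gaussF_ne_zero (hC1 : C1 ≠ 0) (x y : ℝ) : gaussF C1 C2 m1 m2 x y ≠ 0 :=
  mul_ne_zero hC1 (exp_ne_zero _)

theorem log_gaussF (hC1 : C1 ≠ 0) (x y : ℝ) :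
    log (gaussF C1 C2 m1 m2 x y) = log C1 - ((x - m1) ^ 2 + (y - m2) ^ 2) / C2 := by
  rw [gaussF, log_mul hC1 (exp_ne_zero _), log_exp, neg_div, ← sub_eq_add_neg]

theorem inv_gaussF_sq (x y : ℝ) :
    (gaussF C1 C2 m1 m2 x y ^ 2)⁻¹ =
      exp (2 * (m1 ^ 2 + m2 ^ 2) / C2) / C1 ^ 2 *
        exp (2 * (x * (x - 2 * m1) + y * (y - 2 * m2)) / C2) := by
  rw [gaussF, mul_pow, mul_inv, ← exp_nat_mul, ← exp_neg, div_mul_eq_mul_div, ← exp_add,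
    mul_comm, ← div_eq_mul_inv]
  congr 2
  push_cast
  ring

variable {ι : Type*} [Fintype ι] {w x y : ι → ℝ}

theorem sum_mul_log_gaussF (hC1 : C1 ≠ 0) (hw : ∑ i, w i = 0) (hx : ∑ i, w i * x i = 0)
    (hy : ∑ i, w i * y i = 0) :
    ∑ i, w i * log (gaussF C1 C2 m1 m2 (x i) (y i)) =
      -(∑ i, w i * (x i ^ 2 + y i ^ 2)) / C2 := by
  have hterm (i : ι) : w i * log (gaussF C1 C2 m1 m2 (x i) (y i)) =
      w i * (log C1 - (m1 ^ 2 + m2 ^ 2) / C2) + w i * x i * (2 * m1 / C2) +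
        w i * y i * (2 * m2 / C2) + w i * (x i ^ 2 + y i ^ 2) * (-1 / C2) := by
    rw [log_gaussF m1 m2 hC1]
    ring
  simp only [hterm, Finset.sum_add_distrib, ← Finset.sum_mul, hw, hx, hy]
  ring

theorem sq_norm_gradient_width_estimator {μ : EuclideanSpace ℝ ι}
    (hC1 : C1 ≠ 0) (hC2 : C2 ≠ 0) (hw : ∑ i, w i = 0) (hx : ∑ i, w i * x i = 0)
    (hy : ∑ i, w i * y i = 0) (hxy : ∑ i, w i * (x i ^ 2 + y i ^ 2) ≠ 0)
    (hμ : ∀ i, μ i = gaussF C1 C2 m1 m2 (x i) (y i)) :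
    ‖gradient (fun ν : EuclideanSpace ℝ ι =>
        -(∑ i, w i * (x i ^ 2 + y i ^ 2)) / ∑ i, w i * log (ν i)) μ‖ ^ 2 =
      C2 ^ 4 * exp (2 * (m1 ^ 2 + m2 ^ 2) / C2) /
          (C1 ^ 2 * (∑ i, w i * (x i ^ 2 + y i ^ 2)) ^ 2) *
        ∑ i, w i ^ 2 * exp (2 * (x i * (x i - 2 * m1) + y i * (y i - 2 * m2)) / C2) := by
  set K := ∑ i, w i * (x i ^ 2 + y i ^ 2)
  have hlog : ∑ i, w i * log (μ i) = -K / C2 := by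
    simp only [hμ]
    exact sum_mul_log_gaussF m1 m2 hC1 hw hx hy
  have hμ0 (i : ι) : μ i ≠ 0 := hμ i ▸ gaussF_ne_zero m1 m2 hC1 _ _
  have hlog0 : ∑ i, w i * log (μ i) ≠ 0 := hlog ▸ div_ne_zero (neg_ne_zero.mpr hxy) hC2
  rw [sq_norm_gradient_const_div_sum_mul_log _ w hμ0 hlog0, hlog]
  simp only [hμ, div_pow (w _), div_eq_mul_inv (w _ ^ 2), inv_gaussF_sq, mul_left_comm (w _ ^ 2),
    ← Finset.mul_sum]
  field_simp

end GaussianField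

section HexagonalCell

/-- First coordinates of the centre of a hexagonal cell and of its three neighbours. -/
noncomputable def hexX (l : ℝ) : Fin 4 → ℝ := ![0, 0, -(√3 / 2) * l, √3 / 2 * l]

/-- Second coordinates of the centre of a hexagonal cell and of its three neighbours. -/
noncomputable def hexY (l : ℝ) : Fin 4 → ℝ := ![0, l, -(l / 2), -(l / 2)]

/-- The affine dependency between the sensors of a hexagonal cell: three times the centre minus the
sum of its three neighbours. -/
def hexWeight : Fin 4 → ℝ := ![3, -1, -1, -1]

theorem sum_hexWeight : ∑ i, hexWeight i = 0 := by
  simp only [hexWeight, Fin.sum_univ_four, Matrix.cons_val]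
  norm_num

theorem sum_hexWeight_mul_hexX (l : ℝ) : ∑ i, hexWeight i * hexX l i = 0 := by
  simp only [hexWeight, hexX, Fin.sum_univ_four, Matrix.cons_val]
  ring

theorem sum_hexWeight_mul_hexY (l : ℝ) : ∑ i, hexWeight i * hexY l i = 0 := by
  simp only [hexWeight, hexY, Fin.sum_univ_four, Matrix.cons_val]
  ring

theorem sum_hexWeight_mul_sq_add_sq (l : ℝ) :
    ∑ i, hexWeight i * (hexX l i ^ 2 + hexY l i ^ 2) = -(3 * l ^ 2) := by
  have hsqrt : √3 ^ 2 = 3 := sq_sqrt (by norm_num)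
  simp only [hexWeight, hexX, hexY, Fin.sum_univ_four, Matrix.cons_val]
  linear_combination (-(l ^ 2) / 2) * hsqrt

theorem log_pow_three_div_eq_sum_hexWeight_mul_log {ν : Fin 4 → ℝ} (hν : ∀ i, ν i ≠ 0) :
    log (ν 0 ^ 3 / (ν 1 * ν 2 * ν 3)) = ∑ i, hexWeight i * log (ν i) := by
  have h12 : ν 1 * ν 2 ≠ 0 := mul_ne_zero (hν 1) (hν 2)
  rw [log_div (pow_ne_zero 3 (hν 0)) (mul_ne_zero h12 (hν 3)), log_mul h12 (hν 3),
    log_mul (hν 1) (hν 2), log_pow]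
  simp only [hexWeight, Fin.sum_univ_four, Matrix.cons_val]
  push_cast
  ring

theorem sum_sq_hexWeight_mul_exp (l C2 m1 m2 : ℝ) :
    ∑ i, hexWeight i ^ 2 *
        exp (2 * (hexX l i * (hexX l i - 2 * m1) + hexY l i * (hexY l i - 2 * m2)) / C2) =
      9 + exp (2 * l * (l - 2 * m2) / C2) + exp (2 * l * (l + √3 * m1 + m2) / C2)
        + exp (2 * l * (l - √3 * m1 + m2) / C2) := by
  have hsqrt : √3 ^ 2 = 3 := sq_sqrt (by norm_num)
  have hleft : 2 * (-(√3 / 2) * l * (-(√3 / 2) * l - 2 * m1) +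
      -(l / 2) * (-(l / 2) - 2 * m2)) = 2 * l * (l + √3 * m1 + m2) := by
    linear_combination (l ^ 2 / 2) * hsqrt
  have hright : 2 * (√3 / 2 * l * (√3 / 2 * l - 2 * m1) +
      -(l / 2) * (-(l / 2) - 2 * m2)) = 2 * l * (l - √3 * m1 + m2) := by
    linear_combination (l ^ 2 / 2) * hsqrt
  simp only [hexWeight, hexX, hexY, Fin.sum_univ_four, Matrix.cons_val, hleft, hright, zero_mul,
    zero_add, mul_zero, zero_div, exp_zero, ← mul_assoc 2 l]
  ring

end HexagonalCell

theorem sq_norm_gradient_C2_estimator_general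
    {l C1 C2 m1 m2 : ℝ} (hl : l ≠ 0) (hC1 : C1 ≠ 0) (hC2 : C2 ≠ 0)
    {μ : EuclideanSpace ℝ (Fin 4)} (hμ : ∀ i, μ i = gaussF C1 C2 m1 m2 (hexX l i) (hexY l i))
    {ψ : EuclideanSpace ℝ (Fin 4) → ℝ}
    (hψ : ∀ᶠ ν : EuclideanSpace ℝ (Fin 4) in 𝓝 μ,
      ψ ν = 3 * l ^ 2 / log (ν 0 ^ 3 / (ν 1 * ν 2 * ν 3))) :
    ‖gradient ψ μ‖ ^ 2 =
      (C2 ^ 4 * exp (2 * (m1 ^ 2 + m2 ^ 2) / C2) / (9 * C1 ^ 2 * l ^ 4)) *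
        (9 + exp (2 * l * (l - 2 * m2) / C2)
          + exp (2 * l * (l + √3 * m1 + m2) / C2)
          + exp (2 * l * (l - √3 * m1 + m2) / C2)) := by
  have hμ0 (i : Fin 4) : μ i ≠ 0 := hμ i ▸ gaussF_ne_zero m1 m2 hC1 _ _
  have hne : ∀ᶠ ν : EuclideanSpace ℝ (Fin 4) in 𝓝 μ, ∀ i, ν i ≠ 0 :=
    Filter.eventually_all.mpr fun i =>
      (EuclideanSpace.proj (𝕜 := ℝ) i).continuous.continuousAt.eventually_ne (hμ0 i)
  have hψ_sum : ψ =ᶠ[𝓝 μ] fun ν =>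
      -(∑ i, hexWeight i * (hexX l i ^ 2 + hexY l i ^ 2)) / ∑ i, hexWeight i * log (ν i) := by
    filter_upwards [hψ, hne] with ν hψν hν
    rw [hψν, log_pow_three_div_eq_sum_hexWeight_mul_log hν, sum_hexWeight_mul_sq_add_sq, neg_neg]
  have hmoment : ∑ i, hexWeight i * (hexX l i ^ 2 + hexY l i ^ 2) ≠ 0 := by
    rw [sum_hexWeight_mul_sq_add_sq]
    exact neg_ne_zero.mpr (by positivity)
  rw [hψ_sum.gradient_eq, sq_norm_gradient_width_estimator m1 m2 hC1 hC2 sum_hexWeight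
    (sum_hexWeight_mul_hexX l) (sum_hexWeight_mul_hexY l) hmoment hμ,
    sum_hexWeight_mul_sq_add_sq, sum_sq_hexWeight_mul_exp]
  ring

/-- The squared norm of the gradient of the map recovering `C2` from the four
measurements, evaluated at the true measurement vector, equals
`S(l; C2)/σ²`. -/
theorem sq_norm_gradient_C2_estimator
    (l C1 C2 m1 m2 : ℝ) (hl : 0 < l) (hC1 : 0 < C1) (hC2 : 0 < C2)
    (μ : EuclideanSpace ℝ (Fin 4))
    (hμ0 : μ 0 = gaussF C1 C2 m1 m2 0 0)
    (hμ1 : μ 1 = gaussF C1 C2 m1 m2 0 l)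
    (hμ2 : μ 2 = gaussF C1 C2 m1 m2 (-(Real.sqrt 3 / 2) * l) (-(l / 2)))
    (hμ3 : μ 3 = gaussF C1 C2 m1 m2 ((Real.sqrt 3 / 2) * l) (-(l / 2)))
    (ψ : EuclideanSpace ℝ (Fin 4) → ℝ)
    (hψ : ∀ ν : EuclideanSpace ℝ (Fin 4),
      ψ ν = 3 * l ^ 2 / Real.log ((ν 0) ^ 3 / (ν 1 * ν 2 * ν 3))) :
    ‖gradient ψ μ‖ ^ 2 =
      (C2 ^ 4 * Real.exp (2 * (m1 ^ 2 + m2 ^ 2) / C2) / (9 * C1 ^ 2 * l ^ 4)) *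
        (9 + Real.exp (2 * l * (l - 2 * m2) / C2)
          + Real.exp (2 * l * (l + Real.sqrt 3 * m1 + m2) / C2)
          + Real.exp (2 * l * (l - Real.sqrt 3 * m1 + m2) / C2)) := by
  have hμ : ∀ i, μ i = gaussF C1 C2 m1 m2 (hexX l i) (hexY l i) := by
    simpa only [Fin.forall_fin_succ] using ⟨hμ0, hμ1, hμ2, hμ3, fun i => i.elim0⟩
  exact sq_norm_gradient_C2_estimator_general hl.ne' hC1.ne' hC2.ne' hμ (.of_forall hψ)
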